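/- arXiv:1304.0947 — 2 statements merged into one kernel-verified Lean document; each statement's English description precedes it below -/
import Mathlib

section
/- Let M ⊆ ℝ[x,y] be a hermitian module. If M has the Quillen property (Q), then M has the strong moment property (SMP): every ℝ-linear functional L : ℝ[x,y] → ℝ with L ≥ 0 on M is integration with respect to some positive Borel measure on X_M. Conversely, if M is archimedean and has (SMP), then M has (Q). -/
open MvPolynomial Complex Matrix MeasureTheory ComplexOrder

noncomputable section

universe u

/-- `ℂ[z,z̄]`: the polynomial ring in the `2n` variables `z_j` (encoded `Sum.inl j`)
and `z̄_j` (encoded `Sum.inr j`). -/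
abbrev CPoly (n : ℕ) := MvPolynomial (Fin n ⊕ Fin n) ℂ

/-- The involution `f ↦ f*`: conjugate the coefficients and swap `z_j ↔ z̄_j`. -/
def hermStar (n : ℕ) : CPoly n →+* CPoly n :=
  (MvPolynomial.rename (Sum.swap : Fin n ⊕ Fin n → Fin n ⊕ Fin n)).toRingHom.comp
    (MvPolynomial.map (starRingEnd ℂ))

/-- The inclusion of the holomorphic polynomials `ℂ[z]` into `ℂ[z,z̄]`. -/
def hol (n : ℕ) : MvPolynomial (Fin n) ℂ →ₐ[ℂ] CPoly n :=
  MvPolynomial.rename Sum.inl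

/-- Evaluation `f(a,b)` (substituting `a` for `z` and `b` for `z̄`). -/
def evalPair {n : ℕ} (a b : Fin n → ℂ) (f : CPoly n) : ℂ :=
  MvPolynomial.eval (Sum.elim a b) f

/-- Evaluation `f(a) := f(a, ā)`. -/
def evalAt {n : ℕ} (a : Fin n → ℂ) (f : CPoly n) : ℂ :=
  evalPair a (fun j => (starRingEnd ℂ) (a j)) f

/-- `‖z‖² = |z_1|² + ⋯ + |z_n|²`. -/
def normZ (n : ℕ) : CPoly n := ∑ j : Fin n, X (Sum.inl j) * X (Sum.inr j)

/-- `Σ_h`: hermitian sums of squares `∑ |p_i|²`, `p_i ∈ ℂ[z]` holomorphic. -/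
def SigmaH (n : ℕ) : Set (CPoly n) :=
  {f | ∃ (k : ℕ) (p : Fin k → MvPolynomial (Fin n) ℂ),
    f = ∑ i, hol n (p i) * hermStar n (hol n (p i))}

/-- `Σ`: sums of squares `∑ |p_i|²`, `p_i ∈ ℂ[z,z̄]`. -/
def SigmaFull (n : ℕ) : Set (CPoly n) :=
  {f | ∃ (k : ℕ) (p : Fin k → CPoly n), f = ∑ i, p i * hermStar n (p i)}

/-- Ideals `I ⊆ ℝ[x,y]`, viewed as sets of `*`-fixed elements of `ℂ[z,z̄]`. -/
def IsRealIdeal (n : ℕ) (I : Set (CPoly n)) : Prop :=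
  (∀ f ∈ I, hermStar n f = f) ∧ (0 : CPoly n) ∈ I ∧
    (∀ f ∈ I, ∀ g ∈ I, f + g ∈ I) ∧
    ∀ f : CPoly n, hermStar n f = f → ∀ g ∈ I, f * g ∈ I

/-- The semiring `Σ_h + I`. -/
def SigmaHPlus (n : ℕ) (I : Set (CPoly n)) : Set (CPoly n) :=
  {f | ∃ s ∈ SigmaH n, ∃ g ∈ I, f = s + g}

/-- The real zero set `V_ℝ(I) ⊆ ℂⁿ`. -/
def VR (n : ℕ) (I : Set (CPoly n)) : Set (Fin n → ℂ) :=
  {a | ∀ f ∈ I, evalAt a f = 0}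

/-- A subset `M` of `ℝ[x,y]` is archimedean if for every real `f` there is `c ∈ ℝ`
with `c ± f ∈ M`. -/
def IsArchSet (n : ℕ) (M : Set (CPoly n)) : Prop :=
  ∀ f : CPoly n, hermStar n f = f →
    ∃ c : ℝ, (C (c : ℂ) + f) ∈ M ∧ (C (c : ℂ) - f) ∈ M

/-- Hermitian modules in `ℝ[x,y]`. -/
def IsHermitianModule (n : ℕ) (M : Set (CPoly n)) : Prop :=
  (∀ f ∈ M, hermStar n f = f) ∧ (1 : CPoly n) ∈ M ∧
    (∀ f ∈ M, ∀ g ∈ M, f + g ∈ M) ∧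
    ∀ s ∈ SigmaH n, ∀ f ∈ M, s * f ∈ M

/-- The closed set `X_M ⊆ ℂⁿ` associated with a hermitian module. -/
def XM (n : ℕ) (M : Set (CPoly n)) : Set (Fin n → ℂ) :=
  {a | ∀ g ∈ M, 0 ≤ (evalAt a g).re}

/-- Hereditary calculus `ψ_T` for a tuple of bounded operators:
`ψ_T(z^α z̄^β) = T^{*β} T^α` (adjoints to the left). -/
def psiOp {n : ℕ} {E : Type u} [NormedAddCommGroup E] [InnerProductSpace ℂ E]
    [CompleteSpace E] (T : Fin n → E →L[ℂ] E) (f : CPoly n) : E →L[ℂ] E :=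
  ∑ m ∈ f.support, f.coeff m •
    ((List.ofFn fun j => (ContinuousLinearMap.adjoint (T j)) ^ (m (Sum.inr j))).prod *
     (List.ofFn fun j => (T j) ^ (m (Sum.inl j))).prod)

/-- Hereditary calculus `ψ_T` for a tuple of matrices. -/
def psiMat {n m : ℕ} (T : Fin n → Matrix (Fin m) (Fin m) ℂ) (f : CPoly n) :
    Matrix (Fin m) (Fin m) ℂ :=
  ∑ mo ∈ f.support, f.coeff mo •
    ((List.ofFn fun j => ((T j)ᴴ) ^ (mo (Sum.inr j))).prod *
     (List.ofFn fun j => (T j) ^ (mo (Sum.inl j))).prod)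

/-- A commuting tuple `T` on a Hilbert space `E` is subnormal if it extends to a
commuting tuple of bounded normal operators on a larger Hilbert space `E'`,
leaving (the image of) `E` invariant. -/
def IsSubnormal {n : ℕ} {E : Type u} [NormedAddCommGroup E] [InnerProductSpace ℂ E]
    [CompleteSpace E] (T : Fin n → E →L[ℂ] E) : Prop :=
  ∃ (E' : Type u) (_ : NormedAddCommGroup E') (_ : InnerProductSpace ℂ E')
    (_ : CompleteSpace E') (ι : E →ₗᵢ[ℂ] E') (N : Fin n → E' →L[ℂ] E'),
      (∀ i j, Commute (N i) (N j)) ∧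
      (∀ j, Commute (N j) (ContinuousLinearMap.adjoint (N j))) ∧
      ∀ j x, N j (ι x) = ι (T j x)

/-- The "diamond" ideal `I(a,b)`. -/
def Iab {n : ℕ} (a b : Fin n → ℂ) : Set (CPoly n) :=
  {f | evalPair a (fun j => (starRingEnd ℂ) (a j)) f = 0 ∧
       evalPair a (fun j => (starRingEnd ℂ) (b j)) f = 0 ∧
       evalPair b (fun j => (starRingEnd ℂ) (a j)) f = 0 ∧
       evalPair b (fun j => (starRingEnd ℂ) (b j)) f = 0}

/-- The degenerate ideal `J(a,U)`. -/
def Jau {n : ℕ} (a : Fin n → ℂ) (U : Matrix (Fin n) (Fin n) ℂ) : Set (CPoly n) :=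
  {f | evalAt a f = 0 ∧
    U.mulVec (fun k => evalAt a (pderiv (Sum.inl k) f)) = 0 ∧
    (U.map (starRingEnd ℂ)).mulVec (fun k => evalAt a (pderiv (Sum.inr k) f)) = 0 ∧
    Matrix.trace
      (U * Matrix.of fun j k => evalAt a (pderiv (Sum.inr k) (pderiv (Sum.inl j) f))) = 0}


lemma ext_prod {V W : Type*} [AddCommGroup V] [Module ℝ V] [AddCommGroup W] [Module ℝ W]
    (s : PointedCone ℝ (V × W)) (φ : V →ₗ[ℝ] ℝ) (h0 : ∀ v, (v, (0 : W)) ∈ s → 0 ≤ φ v)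
    (hd : ∀ w, ∃ v, (v, w) ∈ s) :
    ∃ g : V × W →ₗ[ℝ] ℝ, (∀ v, g (v, 0) = φ v) ∧ ∀ x ∈ s, 0 ≤ g x := by
  let f : (V × W) →ₗ.[ℝ] ℝ :=
    { domain := LinearMap.ker (LinearMap.snd ℝ V W)
      toFun := (φ.comp (LinearMap.fst ℝ V W)).comp (Submodule.subtype _) }
  have hf : ∀ x : f.domain, f x = φ (x : V × W).1 := fun x => rfl
  obtain ⟨g, hg, hg'⟩ := riesz_extension s f (by
      rintro ⟨⟨v, w⟩, hx⟩ hs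
      rw [hf]
      have : w = 0 := hx
      subst this
      exact h0 v hs) (by
      rintro ⟨v0, w⟩
      obtain ⟨v, hv⟩ := hd w
      refine ⟨⟨(v - v0, 0), by simp [f]⟩, ?_⟩
      simpa using hv)
  refine ⟨g, fun v => ?_, hg'⟩
  exact hg ⟨(v, 0), by simp [f]⟩

open CompactlySupported Filter Topology in
lemma haviland_abs {S X : Type*} [AddCommGroup S] [Module ℝ S] [TopologicalSpace X] [T2Space X]
    [LocallyCompactSpace X] [MeasurableSpace X] [BorelSpace X] (ρ : S →ₗ[ℝ] (X → ℝ))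
    (hρ : ∀ f, Continuous (ρ f)) (one : S) (hone : ∀ x, ρ one x = 1) (N : X → ℝ)
    (hN : Continuous N) (hN0 : ∀ x, 0 ≤ N x) (hNc : ∀ k : ℝ, IsCompact {x | N x ≤ k})
    (hq : ∀ f, ∃ q, ∀ x, |ρ f x| * (1 + N x) ≤ ρ q x) (L : S →ₗ[ℝ] ℝ)
    (hL : ∀ f, (∀ x, 0 ≤ ρ f x) → 0 ≤ L f) :
    ∃ μ : Measure X, ∀ f, Integrable (ρ f) μ ∧ L f = ∫ x, ρ f x ∂μ := by
  let s : PointedCone ℝ (S × C_c(X, ℝ)) :=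
    { carrier := {p | ∀ x, 0 ≤ ρ p.1 x + p.2 x}
      add_mem' := by
        intro a b ha hb x
        have := ha x
        have := hb x
        simp only [Prod.fst_add, Prod.snd_add, map_add, Pi.add_apply,
          CompactlySupportedContinuousMap.add_apply]
        linarith
      zero_mem' := by intro x; simp
      smul_mem' := by
        rintro ⟨c, hc⟩ a ha x
        have := mul_nonneg hc (ha x)
        have e : (⟨c, hc⟩ : {c : ℝ // 0 ≤ c}) • a = c • a := rfl
        rw [e]
        simp only [Prod.smul_fst, Prod.smul_snd, map_smul, Pi.smul_apply,
          CompactlySupportedContinuousMap.smul_apply, smul_eq_mul]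
        linarith }
  have hs : ∀ f g, (f, g) ∈ s ↔ ∀ x, 0 ≤ ρ f x + g x := fun f g => Iff.rfl
  obtain ⟨G, hG, hGs⟩ := ext_prod s L (by
      intro v hv
      apply hL
      intro x
      simpa using (hs _ _).1 hv x) (by
      intro g
      obtain ⟨C, hC⟩ := g.hasCompactSupport.exists_bound_of_continuous g.continuous
      refine ⟨C • one, (hs _ _).2 fun x => ?_⟩
      have := hC x
      rw [Real.norm_eq_abs, abs_le] at this
      simp only [map_smul, Pi.smul_apply, hone, smul_eq_mul]
      linarith)
  let Λ : C_c(X, ℝ) →ₚ[ℝ] ℝ := PositiveLinearMap.mk₀ (G.comp (LinearMap.inr ℝ _ _)) (by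
      intro g hg
      apply hGs
      intro x
      simpa using hg x)
  have hΛ : ∀ g, Λ g = G (0, g) := fun g => rfl
  have hGadd : ∀ f g, G (f, g) = L f + Λ g := by
    intro f g
    rw [hΛ, ← hG, ← map_add]; simp
  let μ := RealRMK.rieszMeasure Λ
  have hμ : ∀ g : C_c(X, ℝ), ∫ x, g x ∂μ = Λ g := RealRMK.integral_rieszMeasure Λ
  have hkey : ∀ f (g : C_c(X, ℝ)), (∀ x, 0 ≤ ρ f x + g x) → 0 ≤ L f + ∫ x, g x ∂μ := by
    intro f g h
    rw [hμ, ← hGadd]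
    exact hGs _ h
  -- cutoffs
  let η : ℕ → X → ℝ := fun k x => max 0 (1 - N x / (k + 1))
  have hη0 : ∀ k x, 0 ≤ η k x := fun k x => le_max_left _ _
  have hη1 : ∀ k x, η k x ≤ 1 := fun k x => max_le zero_le_one (by
    have := div_nonneg (hN0 x) (by positivity : (0:ℝ) ≤ k + 1)
    linarith)
  have hηN : ∀ k x, 1 - η k x ≤ N x / (k + 1) := fun k x => by
    have := le_max_right 0 (1 - N x / ((k : ℝ) + 1))
    simp only [η]; linarith
  let cut : ℕ → S → C_c(X, ℝ) := fun k f =>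
    { toFun := fun x => ρ f x * η k x
      continuous_toFun := by
        have := hρ f
        simp only [η]
        fun_prop
      hasCompactSupport' := by
        refine HasCompactSupport.intro (hNc (k + 1)) ?_
        intro x hx
        have hx' : (k : ℝ) + 1 < N x := not_le.1 hx
        have : 1 < N x / (k + 1) := by
          rw [lt_div_iff₀ (by positivity)]; linarith
        simp only [η]
        rw [max_eq_left (by linarith), mul_zero] }
  have hcut : ∀ k f x, cut k f x = ρ f x * η k x := fun k f x => rfl
  have hint : ∀ p, (∀ x, 0 ≤ ρ p x) → Integrable (ρ p) μ := by
    intro p hp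
    have hb : ∀ k, ∫⁻ x, ENNReal.ofReal (cut k p x) ∂μ ≤ ENNReal.ofReal (L p) := by
      intro k
      rw [← ofReal_integral_eq_lintegral_ofReal]
      · apply ENNReal.ofReal_le_ofReal
        have := hkey p (-(cut k p)) (fun x => by
          have := mul_le_mul_of_nonneg_left (hη1 k x) (hp x)
          simp only [CompactlySupportedContinuousMap.neg_apply, hcut]
          linarith)
        simp only [CompactlySupportedContinuousMap.neg_apply, integral_neg] at this
        linarith
      · exact (cut k p).continuous.integrable_of_hasCompactSupport (cut k p).hasCompactSupport
      · exact Eventually.of_forall fun x => mul_nonneg (hp x) (hη0 k x)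
    refine ⟨(hρ p).aestronglyMeasurable, ?_⟩
    rw [hasFiniteIntegral_iff_ofReal (Eventually.of_forall hp)]
    have hlim : ∀ x, Tendsto (fun k => ENNReal.ofReal (cut k p x)) atTop
        (𝓝 (ENNReal.ofReal (ρ p x))) := by
      intro x
      apply ENNReal.tendsto_ofReal
      have h1 : Tendsto (fun k : ℕ => max 0 (1 - N x * (1 / ((k:ℝ) + 1)))) atTop
          (𝓝 (max 0 (1 - N x * 0))) :=
        tendsto_const_nhds.max (tendsto_const_nhds.sub
          (tendsto_one_div_add_atTop_nhds_zero_nat.const_mul _))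
      have h2 := h1.const_mul (ρ p x)
      simpa [hcut, η, div_eq_mul_inv] using h2
    have hF := lintegral_liminf_le (u := atTop) (μ := μ) (f := fun k x => ENNReal.ofReal (cut k p x))
      (fun k => ((cut k p).continuous.measurable).ennreal_ofReal)
    have e : ∀ x, liminf (fun k => ENNReal.ofReal (cut k p x)) atTop = ENNReal.ofReal (ρ p x) :=
      fun x => (hlim x).liminf_eq
    simp only [e] at hF
    refine lt_of_le_of_lt hF (lt_of_le_of_lt ?_ (ENNReal.ofReal_lt_top (r := L p)))
    exact liminf_le_of_le (by isBoundedDefault) (fun b hb' => by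
      obtain ⟨k, hk⟩ := hb'.exists
      exact hk.trans (hb k))
  refine ⟨μ, fun f => ?_⟩
  obtain ⟨q, hq⟩ := hq f
  have hfq : ∀ x, |ρ f x| ≤ ρ q x := fun x => by
    have := hq x
    nlinarith [abs_nonneg (ρ f x), hN0 x, mul_nonneg (abs_nonneg (ρ f x)) (hN0 x)]
  have hqN : ∀ x, |ρ f x| * N x ≤ ρ q x := fun x => by
    have := hq x
    nlinarith [abs_nonneg (ρ f x), hN0 x, mul_nonneg (abs_nonneg (ρ f x)) (hN0 x)]
  have hqi : Integrable (ρ q) μ := hint q fun x => (abs_nonneg _).trans (hfq x)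
  have hfi : Integrable (ρ f) μ := hqi.mono' (hρ f).aestronglyMeasurable
    (Eventually.of_forall hfq)
  refine ⟨hfi, ?_⟩
  have hdiff : ∀ (k : ℕ) x, |ρ f x - cut k f x| ≤ (1 / ((k:ℝ) + 1)) * ρ q x := by
    intro k x
    have e : ρ f x - cut k f x = ρ f x * (1 - η k x) := by rw [hcut]; ring
    rw [e, abs_mul, abs_of_nonneg (by linarith [hη1 k x] : 0 ≤ 1 - η k x)]
    calc |ρ f x| * (1 - η k x) ≤ |ρ f x| * (N x / (k + 1)) :=
          mul_le_mul_of_nonneg_left (hηN k x) (abs_nonneg _)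
      _ = (1 / ((k:ℝ) + 1)) * (|ρ f x| * N x) := by ring
      _ ≤ _ := mul_le_mul_of_nonneg_left (hqN x) (by positivity)
  have hci : ∀ k, Integrable (fun x => cut k f x) μ := fun k =>
    (cut k f).continuous.integrable_of_hasCompactSupport (cut k f).hasCompactSupport
  have hbd : ∀ k : ℕ, |L f - ∫ x, ρ f x ∂μ| ≤ (1 / ((k:ℝ) + 1)) * (L q + ∫ x, ρ q x ∂μ) := by
    intro k
    have h1 := hkey ((1 / ((k:ℝ) + 1)) • q - f) (cut k f) (fun x => by
      have := (abs_le.1 (hdiff k x)).2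
      simp only [map_sub, map_smul, Pi.sub_apply, Pi.smul_apply, smul_eq_mul]
      linarith)
    have h2 := hkey ((1 / ((k:ℝ) + 1)) • q + f) (-cut k f) (fun x => by
      have := (abs_le.1 (hdiff k x)).1
      simp only [map_add, map_smul, Pi.add_apply, Pi.smul_apply, smul_eq_mul,
        CompactlySupportedContinuousMap.neg_apply]
      linarith)
    have h3 : |∫ x, (ρ f x - cut k f x) ∂μ| ≤ ∫ x, (1 / ((k:ℝ) + 1)) * ρ q x ∂μ := by
      rw [← Real.norm_eq_abs]
      exact norm_integral_le_of_norm_le (hqi.const_mul _) (Eventually.of_forall (hdiff k))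
    rw [integral_sub hfi (hci k), integral_const_mul] at h3
    simp only [CompactlySupportedContinuousMap.neg_apply, integral_neg, map_sub, map_add,
      map_smul, smul_eq_mul] at h1 h2
    have h4 := abs_le.1 h3
    rw [abs_le]
    constructor <;> linarith [h4.1, h4.2]
  have hlim : Tendsto (fun k : ℕ => (1 / ((k:ℝ) + 1)) * (L q + ∫ x, ρ q x ∂μ)) atTop (𝓝 0) := by
    simpa using tendsto_one_div_add_atTop_nhds_zero_nat.mul_const (L q + ∫ x, ρ q x ∂μ)
  have h0 : |L f - ∫ x, ρ f x ∂μ| ≤ 0 := ge_of_tendsto' hlim hbd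
  exact sub_eq_zero.1 (abs_eq_zero.1 (le_antisymm h0 (abs_nonneg _)))

lemma sep_abs {S : Type*} [AddCommGroup S] [Module ℝ S] (M : PointedCone ℝ S) (one : S)
    (hone : one ∈ M) (arch : ∀ f, ∃ c : ℝ, c • one + f ∈ M) (f : S) (hf : f ∉ M) :
    ∃ L : S →ₗ[ℝ] ℝ, (∀ g ∈ M, 0 ≤ L g) ∧ L one = 1 ∧ L f ≤ 0 := by
  have hsm : ∀ (c : ℝ) g, 0 ≤ c → g ∈ M → c • g ∈ M := fun c g hc hg =>
    M.smul_mem hc hg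
  have hone_nn : ∀ a : ℝ, a • one ∈ M → 0 ≤ a := by
    intro a ha
    by_contra hlt
    push Not at hlt
    obtain ⟨c, hc⟩ := arch f
    apply hf
    have hc1 : (|c| / (-a)) • (a • one) ∈ M :=
      hsm _ _ (div_nonneg (abs_nonneg _) (by linarith)) ha
    have hc2 : (|c| - c) • one ∈ M := hsm _ _ (by linarith [le_abs_self c]) hone
    have h3 := M.add_mem (M.add_mem hc1 hc2) hc
    have e : (|c| / (-a)) • (a • one) + (|c| - c) • one + (c • one + f) = f := by
      rw [smul_smul]
      have : |c| / (-a) * a = -|c| := by field_simp [hlt.ne]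
      rw [this]; module
    rwa [e] at h3
  let T : Set ℝ := {c | c • one + f ∈ M}
  have hT0 : ∀ c ∈ T, 0 ≤ c := by
    intro c hc
    by_contra hlt
    push Not at hlt
    apply hf
    have := M.add_mem (hsm (-c) one (by linarith) hone) hc
    have e : (-c) • one + (c • one + f) = f := by module
    rwa [e] at this
  have hTne : T.Nonempty := arch f
  have hTb : BddBelow T := ⟨0, hT0⟩
  let c0 := sInf T
  have hc0 : 0 ≤ c0 := le_csInf hTne hT0
  let ι : (ℝ × ℝ) × S →ₗ[ℝ] S :=
    (((LinearMap.id (R := ℝ) (M := ℝ)).smulRight one).coprod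
      ((LinearMap.id (R := ℝ) (M := ℝ)).smulRight f)).coprod LinearMap.id
  have hι : ∀ a b g, ι ((a, b), g) = a • one + b • f + g := fun a b g => rfl
  let s : PointedCone ℝ ((ℝ × ℝ) × S) :=
    { carrier := {p | ι p ∈ M}
      add_mem' := by
        intro a b ha hb
        simp only [Set.mem_ofPred_eq, map_add]
        exact M.add_mem ha hb
      zero_mem' := by simp
      smul_mem' := by
        rintro ⟨c, hc⟩ a ha
        have e : (⟨c, hc⟩ : {c : ℝ // 0 ≤ c}) • a = c • a := rfl
        rw [e]
        simp only [Set.mem_ofPred_eq, map_smul]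
        exact hsm c _ hc ha }
  have hs : ∀ a b g, ((a, b), g) ∈ s ↔ a • one + b • f + g ∈ M := fun a b g => Iff.rfl
  let φ : ℝ × ℝ →ₗ[ℝ] ℝ := LinearMap.fst ℝ ℝ ℝ - c0 • LinearMap.snd ℝ ℝ ℝ
  have hφ : ∀ a b, φ (a, b) = a - c0 * b := fun a b => rfl
  obtain ⟨G, hG, hGs⟩ := ext_prod s φ (by
      rintro ⟨a, b⟩ h
      rw [hs, add_zero] at h
      rw [hφ]
      rcases lt_trichotomy b 0 with hb | hb | hb
      · -- b < 0
        have h1 : ∀ c ∈ T, 0 ≤ a + (-b) * c := by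
          intro c hc
          apply hone_nn
          have := M.add_mem h (hsm (-b) _ (by linarith) hc)
          have e : a • one + b • f + (-b) • (c • one + f) = (a + (-b) * c) • one := by module
          rwa [e] at this
        have h2 : (-a) / (-b) ≤ c0 := le_csInf hTne (fun c hc => by
          rw [div_le_iff₀ (by linarith)]
          linarith [h1 c hc])
        rw [div_le_iff₀ (by linarith)] at h2
        linarith
      · subst hb
        have : 0 ≤ a := hone_nn a (by simpa using h)
        linarith
      · have h1 : a / b ∈ T := by
          have := hsm b⁻¹ _ (by positivity) h
          have e : b⁻¹ • (a • one + b • f) = (a / b) • one + f := by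
            rw [smul_add, smul_smul, smul_smul, inv_mul_cancel₀ hb.ne', one_smul]
            congr 2; field_simp
          rwa [e] at this
        have h2 : c0 ≤ a / b := csInf_le hTb h1
        rw [le_div_iff₀ hb] at h2
        linarith) (by
      intro w
      obtain ⟨c, hc⟩ := arch w
      exact ⟨(c, 0), (hs _ _ _).2 (by simpa using hc)⟩)
  have hz : ∀ a b g, a • one + b • f + g = 0 → G ((0, 0), g) = - φ (a, b) := by
    intro a b g h
    have h1 : 0 ≤ G ((a, b), g) := hGs _ ((hs _ _ _).2 (by rw [h]; exact M.zero_mem))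
    have h2 : 0 ≤ G (-((a, b), g)) := hGs _ (by
      show ι _ ∈ M
      rw [map_neg, hι, h, neg_zero]; exact M.zero_mem)
    rw [map_neg] at h2
    have h3 : G ((a, b), g) = φ (a, b) + G ((0, 0), g) := by
      rw [← hG, ← map_add]; simp
    linarith
  refine ⟨G.comp (LinearMap.inr ℝ _ _), fun g hg => ?_, ?_, ?_⟩
  · exact hGs ((0, 0), g) ((hs _ _ _).2 (by simpa using hg))
  · have := hz (-1) 0 one (by simp)
    rw [hφ] at this
    show G ((0, 0), one) = 1
    rw [this]; ring
  · have := hz 0 (-1) f (by simp)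
    rw [hφ] at this
    show G ((0, 0), f) ≤ 0
    rw [this]; linarith

/-! ### Concrete facts -/

lemma evalAt_eq {n : ℕ} (a : Fin n → ℂ) (f : CPoly n) :
    evalAt a f = MvPolynomial.eval (Sum.elim a (fun j => (starRingEnd ℂ) (a j))) f := rfl

lemma evalAt_hermStar {n : ℕ} (a : Fin n → ℂ) (f : CPoly n) :
    evalAt a (hermStar n f) = (starRingEnd ℂ) (evalAt a f) := by
  have h : ((MvPolynomial.eval (Sum.elim a (fun j => (starRingEnd ℂ) (a j)))).comp (hermStar n))
      = (starRingEnd ℂ).comp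
        (MvPolynomial.eval (Sum.elim a (fun j => (starRingEnd ℂ) (a j)))) := by
    apply MvPolynomial.ringHom_ext
    · intro r
      simp [hermStar]
    · rintro (i | i) <;> simp [hermStar]
  exact congrArg (fun φ => φ f) h

lemma evalAt_real {n : ℕ} (a : Fin n → ℂ) (f : CPoly n) (hf : hermStar n f = f) :
    evalAt a f = ((evalAt a f).re : ℂ) := by
  have := evalAt_hermStar a f
  rw [hf] at this
  exact (Complex.conj_eq_iff_re.1 this.symm).symm

lemma hermStar_C_real (n : ℕ) (r : ℝ) : hermStar n (C (r : ℂ)) = C (r : ℂ) := by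
  simp [hermStar]

lemma real_smul_eq {n : ℕ} (r : ℝ) (f : CPoly n) : r • f = C (r : ℂ) * f := by
  rw [← MvPolynomial.smul_eq_C_mul]
  exact (algebraMap_smul ℂ r f).symm

def hermSub (n : ℕ) : Submodule ℝ (CPoly n) where
  carrier := {f | hermStar n f = f}
  add_mem' := by
    intro a b ha hb
    simp only [Set.mem_ofPred_eq, map_add] at *
    rw [ha, hb]
  zero_mem' := by simp
  smul_mem' := by
    intro c f hf
    simp only [Set.mem_ofPred_eq] at *
    rw [real_smul_eq, map_mul, hermStar_C_real, hf]

lemma mem_hermSub {n : ℕ} {f : CPoly n} : f ∈ hermSub n ↔ hermStar n f = f := Iff.rfl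

lemma evalAt_real_smul {n : ℕ} (a : Fin n → ℂ) (r : ℝ) (f : CPoly n) :
    evalAt a (r • f) = r * evalAt a f := by
  rw [real_smul_eq, evalAt_eq, map_mul, eval_C]; rfl

lemma evalAt_add {n : ℕ} (a : Fin n → ℂ) (f g : CPoly n) :
    evalAt a (f + g) = evalAt a f + evalAt a g := by
  simp [evalAt_eq]

lemma evalAt_mul {n : ℕ} (a : Fin n → ℂ) (f g : CPoly n) :
    evalAt a (f * g) = evalAt a f * evalAt a g := by
  simp [evalAt_eq]

lemma evalAt_one {n : ℕ} (a : Fin n → ℂ) : evalAt a (1 : CPoly n) = 1 := by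
  simp [evalAt_eq]

lemma evalAt_normZ {n : ℕ} (a : Fin n → ℂ) :
    evalAt a (normZ n) = ((∑ j, ‖a j‖ ^ 2 : ℝ) : ℂ) := by
  simp [evalAt_eq, normZ, Complex.mul_conj, Complex.normSq_eq_norm_sq]

lemma hermStar_normZ (n : ℕ) : hermStar n (normZ n) = normZ n := by
  simp [hermStar, normZ, mul_comm]

lemma continuous_evalAt {n : ℕ} (f : CPoly n) : Continuous fun a : Fin n → ℂ => evalAt a f := by
  simp only [evalAt_eq]
  refine (MvPolynomial.continuous_eval f).comp ?_
  refine continuous_pi ?_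
  rintro (i | i)
  · exact continuous_apply i
  · exact Complex.continuous_conj.comp (continuous_apply i)

lemma isClosed_XM (n : ℕ) (M : Set (CPoly n)) : IsClosed (XM n M) := by
  have : XM n M = ⋂ g ∈ M, {a | 0 ≤ (evalAt a g).re} := by
    ext a; simp [XM]
  rw [this]
  exact isClosed_biInter fun g _ =>
    isClosed_le continuous_const (Complex.continuous_re.comp (continuous_evalAt g))

lemma real_smul_mem {n : ℕ} {M : Set (CPoly n)} (hM : IsHermitianModule n M) (r : ℝ) (hr : 0 ≤ r)
    (f : CPoly n) (hf : f ∈ M) : r • f ∈ M := by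
  rw [real_smul_eq]
  refine hM.2.2.2 _ ⟨1, fun _ => C ((Real.sqrt r : ℝ) : ℂ), ?_⟩ f hf
  have : hol n (C ((Real.sqrt r : ℝ) : ℂ)) = C ((Real.sqrt r : ℝ) : ℂ) := by simp [hol]
  simp only [Finset.univ_unique, Finset.sum_const, Finset.card_singleton, one_smul]
  rw [this, hermStar_C_real, ← C_mul, ← Complex.ofReal_mul, Real.mul_self_sqrt hr]

def coneOf {n : ℕ} {M : Set (CPoly n)} (hM : IsHermitianModule n M) :
    PointedCone ℝ (hermSub n) where
  carrier := {f | (f : CPoly n) ∈ M}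
  add_mem' := fun {a b} ha hb => hM.2.2.1 _ ha _ hb
  zero_mem' := by
    have := real_smul_mem hM 0 le_rfl 1 hM.2.1
    simpa using this
  smul_mem' := by
    rintro ⟨c, hc⟩ a ha
    exact real_smul_mem hM c hc _ ha

def rhoX {n : ℕ} (K : Set (Fin n → ℂ)) : hermSub n →ₗ[ℝ] (K → ℝ) where
  toFun f a := (evalAt (a : Fin n → ℂ) (f : CPoly n)).re
  map_add' f g := by
    funext a; simp [evalAt_add]
  map_smul' r f := by
    funext a; simp [evalAt_real_smul]

lemma rhoX_apply {n : ℕ} (K : Set (Fin n → ℂ)) (f : hermSub n) (a : K) :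
    rhoX K f a = (evalAt (a : Fin n → ℂ) (f : CPoly n)).re := rfl

lemma part_one (n : ℕ) (M : Set (CPoly n)) (hM : IsHermitianModule n M)
    (hQ : ∀ f : CPoly n, hermStar n f = f →
        (∀ a ∈ XM n M, 0 < (evalAt a f).re) → f ∈ M)
    (L : CPoly n →ₗ[ℝ] ℝ) (hL : ∀ g ∈ M, 0 ≤ L g) :
    ∃ μ : Measure (Fin n → ℂ), μ (XM n M)ᶜ = 0 ∧
          ∀ f : CPoly n, hermStar n f = f →
            Integrable (fun a => (evalAt a f).re) μ ∧
            L f = ∫ a, (evalAt a f).re ∂μ := by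
  have hcl := isClosed_XM n M
  have hemb : Topology.IsClosedEmbedding (Subtype.val : XM n M → (Fin n → ℂ)) :=
    hcl.isClosedEmbedding_subtypeVal
  haveI : LocallyCompactSpace (XM n M) := hemb.locallyCompactSpace
  have h1S : hermStar n (1 : CPoly n) = 1 := map_one _
  obtain ⟨ν, hν⟩ := haviland_abs (rhoX (XM n M))
    (fun f => (Complex.continuous_re.comp (continuous_evalAt (f : CPoly n))).comp
      continuous_subtype_val)
    ⟨1, h1S⟩ (fun x => by simp [rhoX_apply, evalAt_one])
    (fun x => ‖(x : Fin n → ℂ)‖) (by fun_prop) (fun x => norm_nonneg _)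
    (fun k => by
      have h := hemb.isCompact_preimage (isCompact_closedBall (0 : Fin n → ℂ) k)
      convert h using 1
      ext x; simp)
    (by
      rintro ⟨f, hf⟩
      have hf' : hermStar n f = f := hf
      refine ⟨⟨(1 + f * f) * (2 + normZ n), ?_⟩, fun x => ?_⟩
      · rw [mem_hermSub]
        simp only [map_mul, map_add, map_one, hermStar_normZ, hf', map_ofNat]
      · have e : evalAt (x : Fin n → ℂ) ((1 + f * f) * (2 + normZ n)) =
          (((1 + (evalAt (x : Fin n → ℂ) f).re * (evalAt (x : Fin n → ℂ) f).re) *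
            (1 + 1 + ∑ j, ‖(x : Fin n → ℂ) j‖ ^ 2) : ℝ) : ℂ) := by
          rw [evalAt_mul, evalAt_add, evalAt_mul, evalAt_one, evalAt_add, evalAt_normZ,
            ← one_add_one_eq_two, evalAt_add, evalAt_one, evalAt_real _ _ hf']
          push_cast
          simp
        simp only [rhoX_apply]
        rw [e, Complex.ofReal_re]
        set t := (evalAt (x : Fin n → ℂ) f).re
        have h1 : |t| ≤ 1 + t * t := by
          rw [abs_le]; constructor <;> nlinarith [sq_nonneg (t - 1), sq_nonneg (t + 1)]
        have h0 : 0 ≤ ∑ j, ‖(x : Fin n → ℂ) j‖ ^ 2 := Finset.sum_nonneg fun j _ => by positivity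
        have h2 : ‖(x : Fin n → ℂ)‖ ≤ 1 + ∑ j, ‖(x : Fin n → ℂ) j‖ ^ 2 := by
          rw [pi_norm_le_iff_of_nonneg (by linarith)]
          intro i
          have := Finset.single_le_sum (f := fun j => ‖(x : Fin n → ℂ) j‖ ^ 2)
            (fun j _ => by positivity) (Finset.mem_univ i)
          nlinarith [sq_nonneg (‖(x : Fin n → ℂ) i‖ - 1)]
        apply mul_le_mul h1 (by linarith) (by positivity) (by nlinarith [mul_self_nonneg t]))
    (L.comp (hermSub n).subtype)
    (by
      rintro ⟨f, hf⟩ hpos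
      have hf' : hermStar n f = f := hf
      show 0 ≤ L f
      have hε : ∀ ε : ℝ, 0 < ε → 0 ≤ L f + ε * L 1 := by
        intro ε hε
        have : f + ε • (1 : CPoly n) ∈ M := by
          apply hQ
          · exact (hermSub n).add_mem hf ((hermSub n).smul_mem ε h1S)
          · intro a ha
            have h := hpos ⟨a, ha⟩
            simp only [rhoX_apply] at h
            rw [evalAt_add, evalAt_real_smul, evalAt_one]
            simp only [mul_one, Complex.add_re, Complex.ofReal_re]
            linarith
        have := hL _ this
        rwa [map_add, map_smul, smul_eq_mul] at this
      have hL1 : 0 ≤ L 1 := hL 1 hM.2.1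
      apply le_of_forall_pos_le_add
      intro δ hδ
      have h := hε (δ / (L 1 + 1)) (by positivity)
      have h' : δ / (L 1 + 1) * L 1 ≤ δ := by
        rw [div_mul_eq_mul_div, div_le_iff₀ (by linarith)]
        nlinarith
      linarith)
  refine ⟨ν.map Subtype.val, ?_, fun f hf => ?_⟩
  · rw [Measure.map_apply measurable_subtype_coe hcl.measurableSet.compl]
    have : (Subtype.val : XM n M → (Fin n → ℂ)) ⁻¹' (XM n M)ᶜ = ∅ := by
      ext x; simp
    rw [this, measure_empty]
  · obtain ⟨h1, h2⟩ := hν ⟨f, hf⟩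
    have hm : AEStronglyMeasurable (fun a : Fin n → ℂ => (evalAt a f).re)
        (ν.map (Subtype.val : XM n M → (Fin n → ℂ))) :=
      (Complex.continuous_re.comp (continuous_evalAt f)).aestronglyMeasurable
    constructor
    · rw [integrable_map_measure hm measurable_subtype_coe.aemeasurable]
      exact h1
    · rw [integral_map measurable_subtype_coe.aemeasurable hm]
      exact h2

lemma part_two (n : ℕ) (M : Set (CPoly n)) (hM : IsHermitianModule n M) (hA : IsArchSet n M)
    (hS : ∀ L : CPoly n →ₗ[ℝ] ℝ, (∀ g ∈ M, 0 ≤ L g) →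
        ∃ μ : Measure (Fin n → ℂ), μ (XM n M)ᶜ = 0 ∧
          ∀ f : CPoly n, hermStar n f = f →
            Integrable (fun a => (evalAt a f).re) μ ∧
            L f = ∫ a, (evalAt a f).re ∂μ)
    (f : CPoly n) (hf : hermStar n f = f)
    (hpos : ∀ a ∈ XM n M, 0 < (evalAt a f).re) : f ∈ M := by
  by_contra hfM
  have h1S : hermStar n (1 : CPoly n) = 1 := map_one _
  obtain ⟨L₀, hL₀, hL1, hLf⟩ := sep_abs (coneOf hM) ⟨1, h1S⟩ hM.2.1 (by
      rintro ⟨g, hg⟩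
      obtain ⟨c, hc, -⟩ := hA g hg
      refine ⟨c, ?_⟩
      show c • (1 : CPoly n) + g ∈ M
      rwa [real_smul_eq, mul_one]) ⟨f, hf⟩ hfM
  obtain ⟨L, hL⟩ := LinearMap.exists_extend L₀
  have hL' : ∀ g (hg : hermStar n g = g), L g = L₀ ⟨g, hg⟩ := fun g hg => by
    rw [← hL]; rfl
  obtain ⟨μ, hμ, hint⟩ := hS L (fun g hg => by
    rw [hL' g (hM.1 g hg)]
    exact hL₀ _ hg)
  obtain ⟨hi, he⟩ := hint f hf
  have hae : ∀ᵐ a ∂μ, 0 < (evalAt a f).re := by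
    have : ∀ᵐ a ∂μ, a ∈ XM n M := mem_ae_iff.2 hμ
    filter_upwards [this] with a ha using hpos a ha
  have hz : ∫ a, (evalAt a f).re ∂μ = 0 := by
    apply le_antisymm
    · rw [← he, hL' f hf]; exact hLf
    · exact integral_nonneg_of_ae (hae.mono fun a ha => ha.le)
  rw [integral_eq_zero_iff_of_nonneg_ae (hae.mono fun a ha => ha.le) hi] at hz
  have hF : ∀ᵐ a ∂μ, False := by
    filter_upwards [hae, hz] with a h1 h2
    exact h1.ne' h2
  have hμ0 : μ = 0 := by
    rw [← ae_eq_bot]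
    exact Filter.eventually_false_iff_eq_bot.1 hF
  have h1 := (hint 1 h1S).2
  rw [hL' 1 h1S, hL1, hμ0] at h1
  simp at h1

/-- Lemma `2.2`: for a hermitian module `M ⊆ ℝ[x,y]`, the Quillen property (Q) implies
the strong moment property (SMP); conversely, if `M` is archimedean then (SMP)
implies (Q). -/
theorem statement16 (n : ℕ) (hn : 0 < n) (M : Set (CPoly n))
    (hM : IsHermitianModule n M) :
    ((∀ f : CPoly n, hermStar n f = f →
        (∀ a ∈ XM n M, 0 < (evalAt a f).re) → f ∈ M) →
      ∀ L : CPoly n →ₗ[ℝ] ℝ, (∀ g ∈ M, 0 ≤ L g) →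
        ∃ μ : Measure (Fin n → ℂ), μ (XM n M)ᶜ = 0 ∧
          ∀ f : CPoly n, hermStar n f = f →
            Integrable (fun a => (evalAt a f).re) μ ∧
            L f = ∫ a, (evalAt a f).re ∂μ) ∧
    (IsArchSet n M →
      (∀ L : CPoly n →ₗ[ℝ] ℝ, (∀ g ∈ M, 0 ≤ L g) →
        ∃ μ : Measure (Fin n → ℂ), μ (XM n M)ᶜ = 0 ∧
          ∀ f : CPoly n, hermStar n f = f →
            Integrable (fun a => (evalAt a f).re) μ ∧
            L f = ∫ a, (evalAt a f).re ∂μ) →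
      ∀ f : CPoly n, hermStar n f = f →
        (∀ a ∈ XM n M, 0 < (evalAt a f).re) → f ∈ M) := by
  exact ⟨fun hQ L hL => part_one n M hM hQ L hL,
    fun hA hS f hf hpos => part_two n M hM hA hS f hf hpos⟩

end
end

section
/- Let M ⊆ ℝ[x,y] be a finitely generated hermitian module, i.e., M = Σ_h + f_1·Σ_h + ⋯ + f_r·Σ_h for finitely many f_1, …, f_r ∈ ℝ[x,y]. If M satisfies (Sf) — every commuting tuple of complex square matrices T with ψ_T(p) positive semidefinite for all p ∈ M is normal — then the set X_M ⊆ ℂⁿ does not contain an analytic disc: there is no nonconstant holomorphic map φ from the open unit disc 𝔻 ⊆ ℂ to ℂⁿ with φ(𝔻) ⊆ X_M. -/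
open MvPolynomial Complex Matrix MeasureTheory ComplexOrder

noncomputable section

universe u

/-- Upper triangular homomorphism. -/
def tauU (c : ℝ) : ℂ × ℂ →* Matrix (Fin 2) (Fin 2) ℂ where
  toFun x := !![x.1, c * (x.2 - x.1); 0, x.2]
  map_one' := by
    ext i j; fin_cases i <;> fin_cases j <;> simp
  map_mul' x y := by
    ext i j; fin_cases i <;> fin_cases j <;> simp [Matrix.mul_apply, Fin.sum_univ_two] <;> ring

/-- Lower triangular homomorphism. -/
def tauL (c : ℝ) : ℂ × ℂ →* Matrix (Fin 2) (Fin 2) ℂ where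
  toFun x := !![x.1, 0; c * (x.2 - x.1), x.2]
  map_one' := by
    ext i j; fin_cases i <;> fin_cases j <;> simp
  map_mul' x y := by
    ext i j; fin_cases i <;> fin_cases j <;> simp [Matrix.mul_apply, Fin.sum_univ_two] <;> ring

/-- The tuple of matrices. -/
def TT {n : ℕ} (c : ℝ) (a b : Fin n → ℂ) (j : Fin n) : Matrix (Fin 2) (Fin 2) ℂ :=
  tauU c (a j, b j)

/-- coordinatewise conjugate -/
def cj {n : ℕ} (a : Fin n → ℂ) : Fin n → ℂ := fun j => (starRingEnd ℂ) (a j)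

/-- The localized form. -/
def EE {n : ℕ} (c : ℝ) (a b : Fin n → ℂ) (f : CPoly n) : Matrix (Fin 2) (Fin 2) ℂ :=
  !![evalPair a (cj a) f, c * evalPair b (cj a) f;
     c * evalPair a (cj b) f, (c ^ 2 + 1) * evalPair b (cj b) f]

/-- Change of basis. -/
def LL (c : ℝ) : Matrix (Fin 2) (Fin 2) ℂ := !![1, -c; 0, 1]

lemma TT_conj {n : ℕ} (c : ℝ) (a b : Fin n → ℂ) (j : Fin n) :
    (TT c a b j)ᴴ = tauL c (cj a j, cj b j) := by
  ext i k; fin_cases i <;> fin_cases k <;>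
    simp [TT, tauU, tauL, cj, Matrix.conjTranspose_apply]

lemma ofFn_tau {n : ℕ} (τ : ℂ × ℂ →* Matrix (Fin 2) (Fin 2) ℂ) (a b : Fin n → ℂ)
    (e : Fin n → ℕ) :
    (List.ofFn fun j => (τ (a j, b j)) ^ (e j)).prod
      = τ (∏ j, a j ^ e j, ∏ j, b j ^ e j) := by
  have : (List.ofFn fun j => (τ (a j, b j)) ^ (e j))
      = (List.ofFn fun j => ((a j, b j) : ℂ × ℂ) ^ (e j)).map τ := by
    rw [List.map_ofFn]; congr 1; funext j; simp [← map_pow]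
  rw [this, ← map_list_prod, List.prod_ofFn]
  congr 1
  ext <;> simp [Prod.fst_prod, Prod.snd_prod]

lemma psi_eq {n : ℕ} (c : ℝ) (a b : Fin n → ℂ) (f : CPoly n) :
    psiMat (TT c a b) f = (LL c)ᴴ * EE c a b f * LL c := by
  have h : ∀ x y : Fin n → ℂ, evalPair x y f
      = ∑ m ∈ f.support, f.coeff m * ((∏ j, x j ^ m (Sum.inl j)) * ∏ j, y j ^ m (Sum.inr j)) := by
    intro x y
    simp [evalPair, MvPolynomial.eval_eq', Fintype.prod_sum_type]
  unfold psiMat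
  simp only [TT_conj]
  simp only [TT, ofFn_tau]
  ext i j
  rw [Matrix.sum_apply]
  fin_cases i <;> fin_cases j <;>
    simp [EE, LL, h, tauU, tauL, Matrix.mul_apply, Fin.sum_univ_two, Matrix.conjTranspose_apply,
      Finset.mul_sum, ← Finset.sum_add_distrib, ← Finset.sum_neg_distrib, Finset.sum_mul] <;>
    refine Finset.sum_congr rfl fun m _ => ?_ <;> ring

lemma evalPair_star {n : ℕ} (a b : Fin n → ℂ) (f : CPoly n) :
    evalPair a (cj b) (hermStar n f) = (starRingEnd ℂ) (evalPair b (cj a) f) := by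
  simp only [evalPair, hermStar, RingHom.comp_apply, AlgHom.toRingHom_eq_coe, RingHom.coe_coe]
  rw [MvPolynomial.eval_rename, MvPolynomial.eval_map, ← MvPolynomial.eval₂_id,
    MvPolynomial.eval₂_comp_left (starRingEnd ℂ), RingHom.comp_id]
  congr 1
  ext (i | i) <;> simp [cj]

lemma evalPair_hol {n : ℕ} (a b : Fin n → ℂ) (p : MvPolynomial (Fin n) ℂ) :
    evalPair a b (hol n p) = MvPolynomial.eval a p := by
  simp only [evalPair, hol]
  rw [MvPolynomial.eval_rename]
  congr 2

lemma evalPair_holstar {n : ℕ} (a b : Fin n → ℂ) (p : MvPolynomial (Fin n) ℂ) :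
    evalPair a (cj b) (hermStar n (hol n p)) = (starRingEnd ℂ) (MvPolynomial.eval b p) := by
  rw [evalPair_star, evalPair_hol]

lemma evalPair_mul {n : ℕ} (a b : Fin n → ℂ) (f g : CPoly n) :
    evalPair a b (f * g) = evalPair a b f * evalPair a b g := by simp [evalPair]

lemma EE_add {n : ℕ} (c : ℝ) (a b : Fin n → ℂ) (f g : CPoly n) :
    EE c a b (f + g) = EE c a b f + EE c a b g := by
  ext i j; fin_cases i <;> fin_cases j <;> simp [EE, evalPair] <;> ring

lemma EE_zero {n : ℕ} (c : ℝ) (a b : Fin n → ℂ) : EE c a b 0 = 0 := by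
  ext i j; fin_cases i <;> fin_cases j <;> simp [EE, evalPair]

lemma EE_sum_psd {n k : ℕ} (c : ℝ) (a b : Fin n → ℂ) (f : Fin k → CPoly n)
    (h : ∀ i, (EE c a b (f i)).PosSemidef) : (EE c a b (∑ i, f i)).PosSemidef := by
  induction k with
  | zero => simpa [EE_zero] using Matrix.PosSemidef.zero
  | succ k ih =>
    rw [Fin.sum_univ_succ, EE_add]
    exact (h 0).add (ih _ fun i => h i.succ)

lemma EE_sq_psd {n : ℕ} (c : ℝ) (a b : Fin n → ℂ) (f : CPoly n) (p : MvPolynomial (Fin n) ℂ)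
    (h : (EE c a b f).PosSemidef) :
    (EE c a b (f * (hol n p * hermStar n (hol n p)))).PosSemidef := by
  have := h.conjTranspose_mul_mul_same
    (Matrix.diagonal ![MvPolynomial.eval a p, MvPolynomial.eval b p])
  convert this using 1
  ext i j; fin_cases i <;> fin_cases j <;>
    simp [EE, evalPair_mul, evalPair_hol, evalPair_holstar, Matrix.mul_apply, Fin.sum_univ_two,
      Matrix.diagonal_conjTranspose, Matrix.diagonal_apply] <;> ring

lemma EE_sigma_psd {n : ℕ} (c : ℝ) (a b : Fin n → ℂ) (f s : CPoly n)
    (h : (EE c a b f).PosSemidef) (hs : s ∈ SigmaH n) : (EE c a b (f * s)).PosSemidef := by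
  obtain ⟨k, p, rfl⟩ := hs
  rw [Finset.mul_sum]
  exact EE_sum_psd _ _ _ _ fun i => EE_sq_psd _ _ _ _ _ h

lemma psd_two (p d : ℝ) (m : ℂ) (hp : 0 < p) (h : ‖m‖ ^ 2 ≤ p * d) :
    (!![(p : ℂ), m; (starRingEnd ℂ) m, (d : ℂ)]).PosSemidef := by
  have hs : (Real.sqrt p) ≠ 0 := (Real.sqrt_pos.2 hp).ne'
  have hs2 : ((Real.sqrt p : ℝ) : ℂ) * (Real.sqrt p : ℝ) = p := by
    rw [← Complex.ofReal_mul, Real.mul_self_sqrt hp.le]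
  have hs' : ((Real.sqrt p : ℝ) : ℂ) ≠ 0 := by exact_mod_cast hs
  have hd : 0 ≤ d - ‖m‖ ^ 2 / p := by
    rw [sub_nonneg, div_le_iff₀ hp]; linarith
  have ht2 : ((Real.sqrt (d - ‖m‖ ^ 2 / p) : ℝ) : ℂ) * (Real.sqrt (d - ‖m‖ ^ 2 / p) : ℝ)
      = d - ‖m‖ ^ 2 / p := by
    rw [← Complex.ofReal_mul, Real.mul_self_sqrt hd]; push_cast; rfl
  have := Matrix.posSemidef_conjTranspose_mul_self
    (!![((Real.sqrt p : ℝ) : ℂ), m / (Real.sqrt p : ℝ); 0, (Real.sqrt (d - ‖m‖ ^ 2 / p) : ℝ)])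
  convert this using 1
  ext i j; fin_cases i <;> fin_cases j <;>
    simp [Matrix.mul_apply, Fin.sum_univ_two, Matrix.conjTranspose_apply]
  · exact hs2.symm
  · field_simp
  · field_simp
  · rw [ht2, div_mul_div_comm, hs2, mul_comm, Complex.mul_conj, Complex.normSq_eq_norm_sq]
    push_cast; ring

lemma EE_one_psd {n : ℕ} (c : ℝ) (a b : Fin n → ℂ) : (EE c a b 1).PosSemidef := by
  have := psd_two 1 (c ^ 2 + 1) c one_pos (by simp)
  convert this using 1
  ext i j; fin_cases i <;> fin_cases j <;> simp [EE, evalPair]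

lemma TT_comm {n : ℕ} (c : ℝ) (a b : Fin n → ℂ) (i j : Fin n) :
    Commute (TT c a b i) (TT c a b j) := by
  unfold TT
  exact (Commute.all _ _).map _

lemma TT_nonnormal {n : ℕ} (c : ℝ) (hc : c ≠ 0) (a b : Fin n → ℂ) (j : Fin n)
    (h : Commute (TT c a b j) (TT c a b j)ᴴ) : a j = b j := by
  have h1 := congrFun (congrFun h.eq 0) 0
  simp [TT, tauU, Matrix.mul_apply, Fin.sum_univ_two, Matrix.conjTranspose_apply] at h1
  have h2 : (c : ℂ) * (b j - a j) * ((c : ℂ) * ((starRingEnd ℂ) (b j) - (starRingEnd ℂ) (a j))) = 0 := by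
    linear_combination h1
  rw [← map_sub] at h2
  simp [hc, ← map_sub, sub_eq_zero] at h2
  exact h2.symm

lemma EE_psd_pos {n : ℕ} (c : ℝ) (a b : Fin n → ℂ) (f : CPoly n) (hf : hermStar n f = f)
    (ha : 0 < (evalAt a f).re) (hb : 0 < (evalAt b f).re)
    (h : c ^ 2 * ‖evalPair b (cj a) f‖ ^ 2 ≤ (evalAt a f).re * (evalAt b f).re) :
    (EE c a b f).PosSemidef := by
  have key : ∀ x y : Fin n → ℂ, evalPair x (cj y) f = (starRingEnd ℂ) (evalPair y (cj x) f) := by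
    intro x y
    conv_lhs => rw [← hf]
    exact evalPair_star _ _ _
  have kr : ∀ x : Fin n → ℂ, evalPair x (cj x) f = ((evalAt x f).re : ℂ) := by
    intro x
    exact (Complex.conj_eq_iff_re.1 (key x x).symm).symm
  have := psd_two (evalAt a f).re ((c ^ 2 + 1) * (evalAt b f).re) (c * evalPair b (cj a) f) ha (by
    rw [norm_mul, mul_pow, Complex.norm_real, Real.norm_eq_abs, sq_abs]
    have : 0 ≤ c ^ 2 * ((evalAt a f).re * (evalAt b f).re) := by positivity
    nlinarith)
  convert this using 1
  unfold EE
  rw [kr a, kr b, key a b]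
  push_cast
  simp

lemma eval_diff {σ : Type} (f : MvPolynomial σ ℂ) (g : σ → ℂ → ℂ) (s : Set ℂ)
    (hg : ∀ i, DifferentiableOn ℂ (g i) s) :
    DifferentiableOn ℂ (fun t => MvPolynomial.eval (fun i => g i t) f) s := by
  induction f using MvPolynomial.induction_on with
  | C a => simp
  | add p q hp hq => simp only [map_add]; exact hp.add hq
  | mul_X p i hp => simp only [map_mul, MvPolynomial.eval_X]; exact hp.mul (hg i)

lemma real_ident (F : ℂ → ℂ) (R : ℝ) (hF : DifferentiableOn ℂ F (Metric.ball 0 R))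
    (h : ∀ t : ℝ, (t : ℂ) ∈ Metric.ball (0 : ℂ) R → F t = 0) (z : ℂ)
    (hz : z ∈ Metric.ball (0 : ℂ) R) : F z = 0 := by
  have hR : 0 < R := Metric.pos_of_mem_ball hz
  have hA := hF.analyticOnNhd Metric.isOpen_ball
  refine hA.eqOn_zero_of_preconnected_of_frequently_eq_zero
    (convex_ball (0 : ℂ) R).isPreconnected (Metric.mem_ball_self hR) ?_ hz
  have ht : Filter.Tendsto (fun t : ℝ => (t : ℂ)) (nhdsWithin 0 {0}ᶜ) (nhdsWithin 0 {0}ᶜ) := by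
    refine tendsto_nhdsWithin_iff.2 ⟨?_, ?_⟩
    · exact (Complex.continuous_ofReal.tendsto' 0 0 (by simp)).mono_left nhdsWithin_le_nhds
    · filter_upwards [self_mem_nhdsWithin] with t ht
      simpa using ht
  refine ht.frequently (Filter.Eventually.frequently ?_)
  have : ∀ᶠ t : ℝ in nhdsWithin 0 {0}ᶜ, (t : ℂ) ∈ Metric.ball (0 : ℂ) R :=
    ht.eventually (Filter.Eventually.filter_mono nhdsWithin_le_nhds (Metric.ball_mem_nhds _ hR))
  filter_upwards [this] with t ht using h t ht

lemma polar {n : ℕ} (φ : ℂ → Fin n → ℂ) (w₀ : ℂ) (ρ : ℝ)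
    (hφ : DifferentiableOn ℂ φ (Metric.ball w₀ ρ)) (f : CPoly n)
    (h0 : ∀ w ∈ Metric.ball w₀ ρ, evalPair (φ w) (cj (φ w)) f = 0)
    (w v : ℂ) (hw : w ∈ Metric.ball w₀ (ρ / 4)) (hv : v ∈ Metric.ball w₀ (ρ / 4)) :
    evalPair (φ w) (cj (φ v)) f = 0 := by
  have hg1 : ∀ j, DifferentiableOn ℂ (fun t => φ (w₀ + t) j) (Metric.ball 0 ρ) := by
    intro j
    have h1 := differentiableOn_pi.1 hφ j
    exact h1.comp (f := fun t => w₀ + t) (by fun_prop) (fun t ht => by simpa using ht)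
  have hg2 : ∀ j, DifferentiableOn ℂ
      (fun t => (starRingEnd ℂ) (φ (w₀ + (starRingEnd ℂ) t) j)) (Metric.ball 0 ρ) := by
    intro j t ht
    have ht' : (starRingEnd ℂ) t ∈ Metric.ball (0 : ℂ) ρ := by simpa using ht
    have h1 := (hg1 j).differentiableAt (Metric.isOpen_ball.mem_nhds ht')
    have := h1.conj_conj
    simp only [Complex.conj_conj] at this
    exact this.differentiableWithinAt
  set K : ℂ → ℂ → ℂ := fun x y => MvPolynomial.eval
    (fun i : Fin n ⊕ Fin n => Sum.elim (fun j => φ (w₀ + (x + I * y)) j)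
      (fun j => (starRingEnd ℂ) (φ (w₀ + (starRingEnd ℂ) (x - I * y)) j)) i) f with hK
  have hn : ∀ x y : ℂ, x ∈ Metric.ball (0 : ℂ) (ρ / 2) → y ∈ Metric.ball (0 : ℂ) (ρ / 2) →
      (x + I * y ∈ Metric.ball (0 : ℂ) ρ ∧ x - I * y ∈ Metric.ball (0 : ℂ) ρ) := by
    intro x y hx hy
    simp only [mem_ball_zero_iff] at *
    have h1 := norm_add_le x (I * y)
    have h2 := norm_sub_le x (I * y)
    simp only [norm_mul, Complex.norm_I, one_mul] at h1 h2
    constructor <;> linarith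
  have hKx : ∀ y ∈ Metric.ball (0 : ℂ) (ρ / 2),
      DifferentiableOn ℂ (fun x => K x y) (Metric.ball 0 (ρ / 2)) := by
    intro y hy
    refine eval_diff f (fun i x => Sum.elim (fun j => φ (w₀ + (x + I * y)) j)
      (fun j => (starRingEnd ℂ) (φ (w₀ + (starRingEnd ℂ) (x - I * y)) j)) i) _ ?_
    rintro (j | j)
    · exact (hg1 j).comp (f := fun x => x + I * y) (by fun_prop) (fun x hx => (hn x y hx hy).1)
    · exact (hg2 j).comp (f := fun x => x - I * y) (by fun_prop) (fun x hx => (hn x y hx hy).2)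
  have hKy : ∀ x ∈ Metric.ball (0 : ℂ) (ρ / 2),
      DifferentiableOn ℂ (fun y => K x y) (Metric.ball 0 (ρ / 2)) := by
    intro x hx
    refine eval_diff f (fun i y => Sum.elim (fun j => φ (w₀ + (x + I * y)) j)
      (fun j => (starRingEnd ℂ) (φ (w₀ + (starRingEnd ℂ) (x - I * y)) j)) i) _ ?_
    rintro (j | j)
    · exact (hg1 j).comp (f := fun y => x + I * y) (by fun_prop) (fun y hy => (hn x y hx hy).1)
    · exact (hg2 j).comp (f := fun y => x - I * y) (by fun_prop) (fun y hy => (hn x y hx hy).2)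
  have step : ∀ x y : ℂ, K x y
      = evalPair (φ (w₀ + (x + I * y))) (cj (φ (w₀ + (starRingEnd ℂ) (x - I * y)))) f := by
    intro x y; rfl
  have hK0 : ∀ x ∈ Metric.ball (0 : ℂ) (ρ / 2), ∀ y ∈ Metric.ball (0 : ℂ) (ρ / 2), K x y = 0 := by
    intro x hx y hy
    refine real_ident (fun y => K x y) _ (hKy x hx) (fun t ht => ?_) y hy
    refine real_ident (fun x => K x t) _ (hKx t ht) (fun s hs => ?_) x hx
    simp only [step]
    have : (starRingEnd ℂ) ((s : ℂ) - I * t) = s + I * t := by simp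
    rw [this]
    exact h0 _ (by simpa using (hn s t hs ht).1)
  have e1 : ‖w - w₀‖ < ρ / 4 := by simpa [dist_eq_norm] using hw
  have e2 : ‖v - w₀‖ < ρ / 4 := by simpa [dist_eq_norm] using hv
  have e2' : ‖(starRingEnd ℂ) (v - w₀)‖ < ρ / 4 := by rwa [RCLike.norm_conj]
  have hx : ((w - w₀) + (starRingEnd ℂ) (v - w₀)) / 2 ∈ Metric.ball (0 : ℂ) (ρ / 2) := by
    rw [mem_ball_zero_iff, norm_div]
    have := norm_add_le (w - w₀) ((starRingEnd ℂ) (v - w₀))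
    simp only [Complex.norm_ofNat]
    linarith [norm_nonneg (w - w₀)]
  have hy : -I * ((w - w₀) - (starRingEnd ℂ) (v - w₀)) / 2 ∈ Metric.ball (0 : ℂ) (ρ / 2) := by
    rw [mem_ball_zero_iff, norm_div, norm_mul, norm_neg, Complex.norm_I, one_mul]
    have := norm_sub_le (w - w₀) ((starRingEnd ℂ) (v - w₀))
    simp only [Complex.norm_ofNat]
    linarith [norm_nonneg (w - w₀)]
  have := hK0 _ hx _ hy
  rw [step] at this
  have a1 : w₀ + (((w - w₀) + (starRingEnd ℂ) (v - w₀)) / 2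
      + I * (-I * ((w - w₀) - (starRingEnd ℂ) (v - w₀)) / 2)) = w := by
    linear_combination (-((w - w₀) - (starRingEnd ℂ) (v - w₀)) / 2) * Complex.I_mul_I
  have a2 : (((w - w₀) + (starRingEnd ℂ) (v - w₀)) / 2
      - I * (-I * ((w - w₀) - (starRingEnd ℂ) (v - w₀)) / 2)) = (starRingEnd ℂ) (v - w₀) := by
    linear_combination (((w - w₀) - (starRingEnd ℂ) (v - w₀)) / 2) * Complex.I_mul_I
  rw [a1, a2, Complex.conj_conj, add_sub_cancel] at this
  exact this

lemma choose_open (r : ℕ) (g : Fin r → ℂ → ℝ) (U : Set ℂ) (hU : IsOpen U) (hne : U.Nonempty)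
    (hg : ∀ i, ContinuousOn (g i) U) :
    ∃ V ⊆ U, IsOpen V ∧ V.Nonempty ∧
      ∀ i, (∀ w ∈ V, 0 < g i w) ∨ (∀ w ∈ V, g i w ≤ 0) := by
  induction r with
  | zero => exact ⟨U, subset_rfl, hU, hne, fun i => i.elim0⟩
  | succ r ih =>
    obtain ⟨V, hVU, hV, hVne, h⟩ := ih (fun i => g i.succ) (fun i => hg i.succ)
    by_cases h0 : ∃ w ∈ V, 0 < g 0 w
    · obtain ⟨w, hw, hpos⟩ := h0
      refine ⟨V ∩ g 0 ⁻¹' Set.Ioi 0, fun x hx => hVU hx.1,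
        ((hg 0).mono hVU).isOpen_inter_preimage hV isOpen_Ioi, ⟨w, hw, hpos⟩, ?_⟩
      intro i
      refine Fin.cases (Or.inl fun x hx => hx.2) (fun i => ?_) i
      exact (h i).imp (fun h x hx => h x hx.1) (fun h x hx => h x hx.1)
    · push Not at h0
      exact ⟨V, hVU, hV, hVne, fun i => Fin.cases (Or.inr h0) h i⟩

lemma zero_mem_SigmaH (n : ℕ) : (0 : CPoly n) ∈ SigmaH n := ⟨0, Fin.elim0, by simp⟩

lemma one_mem_SigmaH (n : ℕ) : (1 : CPoly n) ∈ SigmaH n := ⟨1, fun _ => 1, by simp⟩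

/-- Theorem `ausbau`: a finitely generated hermitian module
`M = Σ_h + f_1 Σ_h + ⋯ + f_r Σ_h` satisfying (Sf) has no analytic disc inside `X_M`. -/
theorem statement19 (n : ℕ) (hn : 0 < n) (r : ℕ) (fgen : Fin r → CPoly n)
    (hfr : ∀ i, hermStar n (fgen i) = fgen i) (M : Set (CPoly n))
    (hMdef : M = {x : CPoly n | ∃ s₀ ∈ SigmaH n, ∃ s : Fin r → CPoly n,
      (∀ i, s i ∈ SigmaH n) ∧ x = s₀ + ∑ i, fgen i * s i})
    (hSf : ∀ (m : ℕ) (T : Fin n → Matrix (Fin m) (Fin m) ℂ),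
      (∀ i j, Commute (T i) (T j)) →
      (∀ p ∈ M, (psiMat T p).PosSemidef) → ∀ j, Commute (T j) ((T j)ᴴ)) :
    ¬ ∃ φ : ℂ → (Fin n → ℂ), DifferentiableOn ℂ φ (Metric.ball (0 : ℂ) 1) ∧
      (∃ w ∈ Metric.ball (0 : ℂ) 1, ∃ w' ∈ Metric.ball (0 : ℂ) 1, φ w ≠ φ w') ∧
      ∀ w ∈ Metric.ball (0 : ℂ) 1, φ w ∈ XM n M := by
  rintro ⟨φ, hφ, ⟨w₁, hw₁, w₂, hw₂, hne⟩, hX⟩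
  have hfM : ∀ i, fgen i ∈ M := by
    intro i
    rw [hMdef]
    refine ⟨0, zero_mem_SigmaH n, fun k => if k = i then 1 else 0, fun k => ?_, ?_⟩
    · dsimp only
      split_ifs
      · exact one_mem_SigmaH n
      · exact zero_mem_SigmaH n
    · simp
  have hnonneg : ∀ i, ∀ w ∈ Metric.ball (0 : ℂ) 1, 0 ≤ (evalAt (φ w) (fgen i)).re :=
    fun i w hw => hX w hw _ (hfM i)
  have hcont : ∀ i, ContinuousOn (fun w => (evalAt (φ w) (fgen i)).re)
      (Metric.ball (0 : ℂ) 1) := by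
    intro i
    have h1 : Continuous fun x : Fin n → ℂ => (evalAt x (fgen i)).re := by
      unfold evalAt evalPair
      refine Complex.continuous_re.comp ((MvPolynomial.continuous_eval (fgen i)).comp ?_)
      refine continuous_pi ?_
      rintro (j | j)
      · exact continuous_apply j
      · exact Complex.continuous_conj.comp (continuous_apply j)
    exact h1.comp_continuousOn hφ.continuousOn
  obtain ⟨V, hVU, hV, ⟨w₀, hw₀⟩, hVg⟩ := choose_open r _ _ Metric.isOpen_ball
    ⟨0, Metric.mem_ball_self one_pos⟩ hcont
  obtain ⟨ρ, hρ, hρV⟩ := Metric.isOpen_iff.1 hV w₀ hw₀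
  have hsub : Metric.ball w₀ (ρ / 4) ⊆ Metric.ball w₀ ρ := Metric.ball_subset_ball (by linarith)
  -- two distinct points
  obtain ⟨v, hv, hvne⟩ : ∃ v ∈ Metric.ball w₀ (ρ / 4), φ v ≠ φ w₀ := by
    by_contra! hcon
    have hA := hφ.analyticOnNhd Metric.isOpen_ball
    have hE := hA.eqOn_of_preconnected_of_eventuallyEq (g := fun _ => φ w₀)
      analyticOnNhd_const (convex_ball (0 : ℂ) 1).isPreconnected (hVU hw₀)
      (Filter.eventuallyEq_of_mem (Metric.ball_mem_nhds w₀ (by linarith : 0 < ρ / 4)) hcon)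
    exact hne ((hE hw₁).trans (hE hw₂).symm)
  have hw₀' : w₀ ∈ Metric.ball w₀ (ρ / 4) := Metric.mem_ball_self (by linarith)
  have hvV : v ∈ V := hρV (hsub hv)
  set a := φ w₀ with ha
  set b := φ v with hb
  have hev : ∀ i, ∀ᶠ c : ℝ in nhdsWithin 0 (Set.Ioi 0), (EE c a b (fgen i)).PosSemidef := by
    intro i
    rcases hVg i with hp | hz
    · have pa := hp w₀ hw₀
      have pb := hp v hvV
      have hlt : ∀ᶠ c : ℝ in nhds 0, c ^ 2 * ‖evalPair b (cj a) (fgen i)‖ ^ 2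
          < (evalAt a (fgen i)).re * (evalAt b (fgen i)).re := by
        have hc : Continuous fun c : ℝ => c ^ 2 * ‖evalPair b (cj a) (fgen i)‖ ^ 2 := by fun_prop
        refine hc.continuousAt.eventually_lt continuousAt_const ?_
        simpa using mul_pos pa pb
      filter_upwards [hlt.filter_mono nhdsWithin_le_nhds] with c hc
      exact EE_psd_pos c a b _ (hfr i) pa pb hc.le
    · have h0 : ∀ w ∈ Metric.ball w₀ ρ, evalPair (φ w) (cj (φ w)) (fgen i) = 0 := by
        intro w hw
        have hre : (evalAt (φ w) (fgen i)).re = 0 :=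
          le_antisymm (hz w (hρV hw)) (hnonneg i w (hVU (hρV hw)))
        have hconj : (starRingEnd ℂ) (evalPair (φ w) (cj (φ w)) (fgen i))
            = evalPair (φ w) (cj (φ w)) (fgen i) := by
          rw [← evalPair_star, hfr]
        rw [← Complex.conj_eq_iff_re.1 hconj]
        exact congrArg _ hre
      have hpol := polar φ w₀ ρ (hφ.mono (hρV.trans hVU)) (fgen i) h0
      refine Filter.Eventually.of_forall fun c => ?_
      have : EE c a b (fgen i) = 0 := by
        unfold EE
        rw [hpol w₀ w₀ hw₀' hw₀', hpol v w₀ hv hw₀', hpol w₀ v hw₀' hv, hpol v v hv hv]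
        ext k l; fin_cases k <;> fin_cases l <;> simp
      rw [this]
      exact Matrix.PosSemidef.zero
  obtain ⟨c, hcpsd, hcpos⟩ := ((Filter.eventually_all.2 hev).and self_mem_nhdsWithin).exists
  have hnormal := hSf 2 (TT c a b) (TT_comm c a b) (by
    intro p hp
    rw [hMdef] at hp
    obtain ⟨s₀, hs₀, s, hs, rfl⟩ := hp
    rw [psi_eq]
    refine Matrix.PosSemidef.conjTranspose_mul_mul_same ?_ _
    rw [EE_add]
    refine Matrix.PosSemidef.add ?_ ?_
    · simpa using EE_sigma_psd c a b 1 s₀ (EE_one_psd c a b) hs₀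
    · exact EE_sum_psd _ _ _ _ fun i => EE_sigma_psd c a b _ _ (hcpsd i) (hs i))
  apply hvne
  funext j
  exact (TT_nonnormal c (ne_of_gt hcpos) a b j (hnormal j)).symm

end
end
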